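/- Let σ be a permutation of [n] with σ(1) = 1, and for d ≥ 1 let λ_d be the number of cycles of σ of length d (fixed points counting as 1-cycles). Set Λ_d = {i ∈ [n] : σ^d(i) = i}, Λ'_1 = {1}, and for d ≥ 2, Λ'_d = {i ∈ [n] : σ^e(i) = i for some divisor e of d with e < d}. Define a σ-Prüfer sequence to be a family (s_d)_{1 ≤ d ≤ n} where: s_1 is a sequence of length λ_1 − 1 with entries in Λ_1 whose last entry (when λ_1 ≥ 2) lies in Λ'_1; and for each d ≥ 2, s_d is a sequence of length λ_d with entries in Λ_d whose last entry (when λ_d ≥ 1) lies in Λ'_d. Then there is a bijection between the set of σ-Prüfer sequences and the set of σ-invariant labeled trees on [n] (rooted at 1). -/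

import Mathlib

/-!
A tree rooted at the fixed point `o` of `σ` is the same as its parent function `p`, and the tree is
`σ`-invariant exactly when `p` commutes with `σ` (`tree_equiv`). An equivariant `p` is determined by
its values on one representative of each cycle of `σ` other than `{o}`; the value on a
representative `c` of a cycle of length `d` can be any point of `Λ_d`, since its period must divide
`d`. Periods never increase along `p`, so a closed chain of parents stays within one cycle length,
and the condition that `p` has no such chain splits into one condition for each `d`
(`parent_equiv`).

For a fixed `d`, with `k` representatives and `a = |Λ'_d|`, the set `Λ_d` is the disjoint union of
`Λ'_d` and of `d` copies of the set of representatives (`exists_lamEquiv`). The admissible choices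
are thus the acyclic maps `C → A ⊕ C × B` with `|A| = a`, `|B| = d`, `|C| = k`. Their number is
`a (a + d k) ^ (k - 1)` for `k ≥ 1` (`card_acyc`), by induction on `k`, removing the elements that are
mapped directly to `A`. As `|Λ_d| = a + d k`, this is also the number of sequences of length `k` in
`Λ_d` with last entry in `Λ'_d` (`card_lastIn`), that is, of blocks of index `d` of `σ`-Prüfer
sequences. Bijections for the separate blocks are assembled into the required one.
-/

/-- The number of cycles of length `d` of a permutation of `Fin n`
(fixed points count as cycles of length 1). -/
noncomputable def cycleCount {n : ℕ} (σ : Equiv.Perm (Fin n)) (d : ℕ) : ℕ :=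
  (Finset.univ.filter fun i : Fin n => Function.minimalPeriod (⇑σ) i = d).card / d

/-- The length of the block of a σ-Prüfer sequence associated to cycle length `d`:
`λ_1 − 1` for `d = 1` and `λ_d` for `d ≥ 2`. -/
noncomputable def pruferLen {n : ℕ} (σ : Equiv.Perm (Fin n)) (d : ℕ) : ℕ :=
  if d = 1 then cycleCount σ 1 - 1 else cycleCount σ d

/-- A σ-Prüfer sequence: a family of blocks, one for each cycle length `d`, where the
block for `d` has length `pruferLen σ d` (this is `0` for `d = 0` and for `d > n`, so
those blocks are trivial), entries of the block for `d` lie in `Λ_d = {i : σ^d i = i}`,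
the last entry of the block for `d = 1` is the root `1` (i.e. `0 : Fin n`), and the last
entry of the block for `d ≥ 2` lies in
`Λ'_d = {i : σ^e i = i for some divisor e of d with e < d}`. -/
structure SigmaPruferSeq {n : ℕ} (σ : Equiv.Perm (Fin n)) : Type where
  s : (d : ℕ) → Fin (pruferLen σ d) → Fin n
  entries_mem : ∀ (d : ℕ) (k : Fin (pruferLen σ d)), (σ ^ d) (s d k) = s d k
  last_one : ∀ h : 0 < pruferLen σ 1,
    (s 1 ⟨pruferLen σ 1 - 1, Nat.sub_lt h Nat.one_pos⟩).val = 0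
  last_of_ge_two : ∀ (d : ℕ), 2 ≤ d → ∀ h : 0 < pruferLen σ d,
    ∃ e, e ∣ d ∧ e < d ∧
      (σ ^ e) (s d ⟨pruferLen σ d - 1, Nat.sub_lt h Nat.one_pos⟩) =
        s d ⟨pruferLen σ d - 1, Nat.sub_lt h Nat.one_pos⟩

/-! ### Counting acyclic maps -/

/-- A map `f : C → A ⊕ C × B` is viewed as a system of pointers, from each `c : C` either to an
exit in `A` or to one of the `B`-indexed copies of an element of `C`. It is acyclic when following
pointers always ends in `A`; this is encoded by a rank function decreasing along the pointers that
stay in `C`. -/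
def Acyc {C A B : Type} (f : C → A ⊕ C × B) : Prop :=
  ∃ r : C → ℕ, ∀ c c' b, f c = .inr (c', b) → r c' < r c

/-- `a (a + b k) ^ (k - 1)`, read as `1` for `k = 0`: the number of acyclic maps
`C → A ⊕ C × B` with `|A| = a`, `|B| = b`, `|C| = k`. -/
def forestCount (a b k : ℕ) : ℕ := if k = 0 then 1 else a * (a + b * k) ^ (k - 1)

/-- The recursion of `forestCount` over the number `j` of elements that point directly to an
exit. After the absorption identity `(j + 1) C(m + 1, j + 1) = (m + 1) C(m, j)` it is the binomial
theorem. -/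
theorem sum_forestCount (a b m : ℕ) :
    ∑ j ∈ Finset.range (m + 1 + 1),
      (m + 1).choose j • (a ^ j * forestCount (j * b) b (m + 1 - j)) =
    forestCount a b (m + 1) := by
  rw [Finset.sum_range_succ']
  have h0 : forestCount (0 * b) b (m + 1 - 0) = 0 := by simp [forestCount]
  rw [h0]
  simp only [mul_zero, smul_zero, add_zero]
  have : forestCount a b (m + 1) = a * (a + b * (m + 1)) ^ m := by simp [forestCount]
  rw [this, add_pow, Finset.mul_sum]
  refine Finset.sum_congr rfl fun i hi => ?_
  have hi' : i ≤ m := Nat.lt_succ_iff.mp (Finset.mem_range.mp hi)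
  obtain ⟨t, rfl⟩ := Nat.exists_eq_add_of_le hi'
  have e1 : i + t + 1 - (i + 1) = t := by omega
  have e2 : i + t - i = t := by omega
  rw [e1, e2, smul_eq_mul]
  cases t with
  | zero => simp [forestCount]; ring
  | succ t =>
    have hc := Nat.add_one_mul_choose_eq (i + (t + 1)) i
    have hF : forestCount ((i + 1) * b) b (t + 1) =
        (i + 1) * b * (b * (i + (t + 1) + 1)) ^ t := by
      simp only [forestCount, Nat.add_one_ne_zero, if_false, Nat.add_sub_cancel]
      congr 2; ring
    rw [hF]
    simp only [Nat.cast_id]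
    calc _ = ((i + (t + 1) + 1).choose (i + 1) * (i + 1)) *
          (a ^ (i + 1) * b * (b * (i + (t + 1) + 1)) ^ t) := by ring
      _ = _ := by rw [← hc]; ring

/-- Fixing the set `S` of elements that point to an exit, an acyclic map is a free choice of exits
on `S` together with an acyclic map on the complement of `S` whose exits are the copies of
elements of `S`. -/
theorem card_fiber {C A B : Type} [Finite C] [Finite A] [Finite B] (S : Finset C) :
    Nat.card {f : C → A ⊕ C × B // Acyc f ∧ ∀ c, c ∈ S ↔ (f c).isLeft = true} =
    Nat.card ((S → A) ×
      {g : {c // c ∉ S} → (S × B) ⊕ ({c // c ∉ S} × B) // Acyc g}) := by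
  classical
  symm
  let split : (S × B) ⊕ ({c // c ∉ S} × B) → C × B :=
    Sum.elim (fun x => (x.1.1, x.2)) (fun x => (x.1.1, x.2))
  have hinj : Function.Injective split := by
    rintro (⟨⟨c, hc⟩, b⟩ | ⟨⟨c, hc⟩, b⟩) (⟨⟨c', hc'⟩, b'⟩ | ⟨⟨c', hc'⟩, b'⟩) h <;>
      simp [split] at h ⊢ <;> grind
  have hsurj : ∀ x : C × B, ∃ y, split y = x := by
    rintro ⟨c, b⟩
    by_cases h : c ∈ S
    · exact ⟨.inl (⟨c, h⟩, b), rfl⟩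
    · exact ⟨.inr (⟨c, h⟩, b), rfl⟩
  let glue : (S → A) → ({c // c ∉ S} → (S × B) ⊕ ({c // c ∉ S} × B)) → C → A ⊕ C × B :=
    fun u g c => if h : c ∈ S then .inl (u ⟨c, h⟩) else .inr (split (g ⟨c, h⟩))
  have hin : ∀ u g (c : C) (h : c ∈ S), glue u g c = .inl (u ⟨c, h⟩) := by
    intro u g c h; simp [glue, h]
  have hout : ∀ u g (c : C) (h : c ∉ S), glue u g c = .inr (split (g ⟨c, h⟩)) := by
    intro u g c h; simp [glue, h]
  refine Nat.card_eq_of_bijective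
    (fun x => (⟨glue x.1 x.2.1, ?_, ?_⟩ :
      {f : C → A ⊕ C × B // Acyc f ∧ ∀ c, c ∈ S ↔ (f c).isLeft = true})) ⟨?_, ?_⟩
  · obtain ⟨u, g, r, hr⟩ := x
    refine ⟨fun c => if h : c ∈ S then 0 else r ⟨c, h⟩ + 1, fun c c' b h => ?_⟩
    by_cases hc : c ∈ S
    · rw [hin _ _ _ hc] at h; cases h
    · rw [hout _ _ _ hc] at h
      by_cases hc' : c' ∈ S
      · simp [hc, hc']
      · have := hr ⟨c, hc⟩ ⟨c', hc'⟩ b (hinj (by simpa [split] using h))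
        simpa [hc, hc'] using this
  · intro c
    by_cases hc : c ∈ S
    · simp [hin _ _ _ hc, hc]
    · simp [hout _ _ _ hc, hc]
  · rintro ⟨u, g, hg⟩ ⟨u', g', hg'⟩ h
    have h' : glue u g = glue u' g' := congrArg Subtype.val h
    have h1 : u = u' := by
      funext ⟨c, hc⟩
      have := congrFun h' c
      rw [hin _ _ _ hc, hin _ _ _ hc] at this
      exact Sum.inl.inj this
    have h2 : g = g' := by
      funext ⟨c, hc⟩
      have := congrFun h' c
      rw [hout _ _ _ hc, hout _ _ _ hc] at this
      exact hinj (Sum.inr.inj this)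
    subst h1 h2; rfl
  · rintro ⟨f, ⟨r, hr⟩, hf⟩
    have hA : ∀ c : S, ∃ a, f c = .inl a := fun c => by
      have := (hf c).1 c.2
      exact Sum.isLeft_iff.1 this
    have hB : ∀ c : {c // c ∉ S}, ∃ y, f c = .inr (split y) := fun c => by
      have h1 : ¬ (f c).isLeft = true := fun h => c.2 ((hf c).2 h)
      rcases h : f c with a | x
      · simp [h] at h1
      · obtain ⟨y, rfl⟩ := hsurj x
        exact ⟨y, rfl⟩
    choose u hu using hA
    choose g hg using hB
    refine ⟨⟨u, g, fun c => r c, fun c c' b h => ?_⟩, Subtype.ext (funext fun c => ?_)⟩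
    · exact hr c c' b (by rw [hg, h]; rfl)
    · by_cases hc : c ∈ S
      · exact (hin _ _ _ hc).trans (hu ⟨c, hc⟩).symm
      · exact (hout _ _ _ hc).trans (hg ⟨c, hc⟩).symm

theorem card_acyc (B : Type) [Finite B] (k : ℕ) : ∀ (C A : Type) [Finite C] [Finite A],
    Nat.card C = k → Nat.card {f : C → A ⊕ C × B // Acyc f} =
      forestCount (Nat.card A) (Nat.card B) k := by
  classical
  induction k using Nat.strong_induction_on with
  | _ k ih =>
  intro C A _ _ hk
  cases k with
  | zero =>
    have : IsEmpty C := Finite.card_eq_zero_iff.1 hk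
    have : Unique {f : C → A ⊕ C × B // Acyc f} :=
      { default := ⟨isEmptyElim, fun _ => 0, fun c => isEmptyElim c⟩
        uniq := fun f => Subtype.ext (Subsingleton.elim _ _) }
    simp [forestCount]
  | succ m =>
    have := Fintype.ofFinite C
    have hC : Nonempty C := by
      rw [← Finite.card_pos_iff]; omega
    let L : {f : C → A ⊕ C × B // Acyc f} → Finset C :=
      fun f => Finset.univ.filter fun c => (f.1 c).isLeft = true
    rw [← Nat.card_congr (Equiv.sigmaFiberEquiv L), Nat.card_sigma]
    have key : ∀ S : Finset C, Nat.card {f // L f = S} =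
        Nat.card A ^ S.card * forestCount (S.card * Nat.card B) (Nat.card B)
          (m + 1 - S.card) := by
      intro S
      have e : Nat.card {f // L f = S} = Nat.card {f : C → A ⊕ C × B //
          Acyc f ∧ ∀ c, c ∈ S ↔ (f c).isLeft = true} := by
        refine Nat.card_congr ((Equiv.subtypeSubtypeEquivSubtypeInter _
          (fun f : C → A ⊕ C × B => (Finset.univ.filter fun c => (f c).isLeft = true) = S)).trans
          (Equiv.subtypeEquivRight fun f => and_congr_right fun _ => ?_))
        simp [Finset.ext_iff, iff_comm]
      rw [e, card_fiber, Nat.card_prod]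
      have h1 : Nat.card (S → A) = Nat.card A ^ S.card := by
        simp [Nat.card_fun]
      have h2 : Nat.card {c // c ∉ S} = m + 1 - S.card := by
        rw [← hk, Nat.card_eq_fintype_card, Nat.card_eq_fintype_card, Fintype.card_subtype_compl]
        simp
      rw [h1]
      congr 1
      -- `S = ∅` escapes the induction hypothesis, but an acyclic map on a nonempty `C` has an exit:
      -- the pointer at an element of least rank.
      rcases S.eq_empty_or_nonempty with rfl | hS
      · rw [show forestCount ((∅ : Finset C).card * Nat.card B) (Nat.card B)
          (m + 1 - (∅ : Finset C).card) = 0 by simp [forestCount]]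
        rw [Finite.card_eq_zero_iff]
        refine ⟨fun ⟨g, r, hr⟩ => ?_⟩
        obtain ⟨c0⟩ := hC
        obtain ⟨c, hc⟩ := exists_minimal_of_wellFoundedLT
          (fun x : ℕ => ∃ c, r c = x) ⟨_, ⟨c0, by simp⟩, rfl⟩
        obtain ⟨⟨c, rfl⟩, hmin⟩ := And.intro hc.1 hc.2
        rcases h : g c with x | ⟨c', b⟩
        · exact absurd x.1.2 (Finset.notMem_empty _)
        · have := hr c c' b h
          have := hmin ⟨c', rfl⟩ this.le
          omega
      · rw [ih (m + 1 - S.card) (by have := hS.card_pos; omega) _ _ h2]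
        simp
    rw [Finset.sum_congr rfl fun S _ => key S, ← Finset.powerset_univ,
      Finset.sum_powerset_apply_card (fun j => Nat.card A ^ j *
        forestCount (j * Nat.card B) (Nat.card B) (m + 1 - j)), Finset.card_univ,
      ← Nat.card_eq_fintype_card, hk, sum_forestCount]

/-- Sequences of length `k` in `X` whose last entry satisfies `P` are counted by the same
formula as acyclic maps. -/
theorem card_lastIn {X : Type} [Finite X] (P : X → Prop) (b k : ℕ)
    (hX : Nat.card X = Nat.card {x // P x} + b * k) :
    Nat.card {s : Fin k → X // ∀ h : 0 < k, P (s ⟨k - 1, Nat.sub_lt h Nat.one_pos⟩)} =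
      forestCount (Nat.card {x // P x}) b k := by
  cases k with
  | zero =>
    have : Unique {s : Fin 0 → X //
        ∀ h : 0 < 0, P (s ⟨0 - 1, Nat.sub_lt h Nat.one_pos⟩)} :=
      { default := ⟨isEmptyElim, fun h => absurd h (lt_irrefl _)⟩
        uniq := fun f => Subtype.ext (Subsingleton.elim _ _) }
    simp [forestCount]
  | succ m =>
    have : Nat.card ({x // P x} × (Fin m → X)) = forestCount (Nat.card {x // P x}) b (m + 1) := by
      simp [forestCount, Nat.card_fun, hX]
    rw [← this]
    symm
    refine Nat.card_eq_of_bijective (fun x => (⟨Fin.snoc x.2 x.1.1, fun _ => ?_⟩ :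
      {s : Fin (m + 1) → X //
        ∀ h : 0 < m + 1, P (s ⟨m + 1 - 1, Nat.sub_lt h Nat.one_pos⟩)})) ⟨?_, ?_⟩
    · change P ((Fin.snoc x.2 x.1.1 : Fin (m + 1) → X) (Fin.last m))
      rw [Fin.snoc_last]
      exact x.1.2
    · rintro ⟨⟨a, ha⟩, s⟩ ⟨⟨a', ha'⟩, s'⟩ h
      have h' : (Fin.snoc s a : Fin (m + 1) → X) = Fin.snoc s' a' := congrArg Subtype.val h
      obtain ⟨h2, h1⟩ := Fin.snoc_injective2 h'
      subst h1 h2; rfl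
    · rintro ⟨s, hs⟩
      exact ⟨⟨⟨s (Fin.last m), hs (Nat.succ_pos m)⟩, fun i => s i.castSucc⟩,
        Subtype.ext (Fin.snoc_init_self s)⟩

/-! ### Rooted trees and parent functions -/

open Function in
theorem pow_fix_iff {V : Type} (σ : Equiv.Perm V) (k : ℕ) (v : V) :
    (σ ^ k) v = v ↔ minimalPeriod σ v ∣ k := by
  rw [← isPeriodicPt_iff_minimalPeriod_dvd, IsPeriodicPt, IsFixedPt, Equiv.Perm.iterate_eq_pow]

/-- `p` is the parent function of a tree rooted at `o`: `p o = o` by convention, and iterating `p`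
leads every vertex to `o`, as witnessed by a rank function. -/
def IsParent {V : Type} (o : V) (p : V → V) : Prop :=
  p o = o ∧ ∃ r : V → ℕ, ∀ v, v ≠ o → r (p v) < r v

/-- The graph whose edges join each vertex `v` with `p v ≠ v` to `p v`. -/
def parentGraph {V : Type} (p : V → V) : SimpleGraph V :=
  SimpleGraph.fromRel fun v w => p v = w

section Tree
variable {V : Type} {o : V} {p q : V → V}

theorem IsParent.ne (hp : IsParent o p) {v : V} (hv : v ≠ o) : p v ≠ v := by
  obtain ⟨-, r, hr⟩ := hp
  intro h
  have := hr v hv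
  rw [h] at this
  exact lt_irrefl _ this

theorem IsParent.adj (hp : IsParent o p) {v : V} (hv : v ≠ o) : (parentGraph p).Adj v (p v) := by
  rw [parentGraph, SimpleGraph.fromRel_adj]
  exact ⟨(hp.ne hv).symm, Or.inl rfl⟩

theorem IsParent.isTree [Finite V] (hp : IsParent o p) : (parentGraph p).IsTree := by
  classical
  have hconn : (parentGraph p).Connected := by
    obtain ⟨r, hr⟩ := hp.2
    have key : ∀ k v, r v = k → (parentGraph p).Reachable v o := by
      intro k
      induction k using Nat.strong_induction_on with
      | _ k ih =>
        intro v hv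
        by_cases h : v = o
        · subst h; exact SimpleGraph.Reachable.refl _
        · exact (hp.adj h).reachable.trans (ih _ (hv ▸ hr v h) _ rfl)
    exact SimpleGraph.connected_iff_exists_forall_reachable _ |>.2
      ⟨o, fun v => (key _ v rfl).symm⟩
  rw [SimpleGraph.isTree_iff_connected_and_card]
  refine ⟨hconn, le_antisymm ?_ hconn.card_vert_le_card_edgeSet_add_one⟩
  have hsub : (parentGraph p).edgeSet ⊆ Set.image (fun v => s(v, p v)) {v | v ≠ o} := by
    intro e
    induction e with
    | _ v w =>
      intro h
      rw [SimpleGraph.mem_edgeSet, parentGraph, SimpleGraph.fromRel_adj] at h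
      obtain ⟨hne, rfl | rfl⟩ := h
      · exact ⟨v, fun h => hne (by rw [h, hp.1]), rfl⟩
      · exact ⟨w, fun h => hne (by rw [h, hp.1]), Sym2.eq_swap⟩
  have h1 : Nat.card (parentGraph p).edgeSet ≤ {v : V | v ≠ o}.ncard :=
    (Set.ncard_le_ncard hsub (Set.toFinite _)).trans (Set.ncard_image_le (Set.toFinite _))
  have h2 : {v : V | v ≠ o}.ncard + 1 = Nat.card V := by
    have := Set.ncard_add_ncard_compl {o}
    rw [Set.ncard_singleton] at this
    rw [← this, add_comm]; rfl
  omega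

/-- The root and the tree determine the parent function: were `p v ≠ q v`, the edge from
`v` to `p v` would force `q (p v) = v`, hence `p (p v) = v` by induction on the rank, which is
impossible. -/
theorem parentGraph_inj (hp : IsParent o p) (hq : IsParent o q)
    (h : parentGraph p = parentGraph q) : p = q := by
  obtain ⟨r, hr⟩ := hp.2
  have key : ∀ k v, r v = k → p v = q v := by
    intro k
    induction k using Nat.strong_induction_on with
    | _ k ih =>
      intro v hv
      by_cases hvo : v = o
      · rw [hvo, hp.1, hq.1]
      · have hadj := hp.adj hvo
        rw [h, parentGraph, SimpleGraph.fromRel_adj] at hadj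
        rcases hadj.2 with h1 | h1
        · exact h1.symm
        · exfalso
          by_cases hpo : p v = o
          · rw [hpo, hq.1] at h1; exact hvo h1.symm
          · have h2 := ih _ (hv ▸ hr v hvo) _ rfl
            have h3 := hr _ hpo
            rw [h2, h1] at h3
            exact absurd h3 (hr v hvo).le.not_gt
  funext v
  exact key _ v rfl

/-- Every tree arises from a parent function, here a neighbour closer to the root. -/
theorem exists_parent [Finite V] (o : V) {T : SimpleGraph V} (hT : T.IsTree) :
    ∃ p, IsParent o p ∧ parentGraph p = T := by
  classical
  have h : ∀ v, ∃ w, (v = o → w = o) ∧ (v ≠ o → T.Adj v w ∧ T.dist w o < T.dist v o) := by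
    intro v
    by_cases hv : v = o
    · exact ⟨o, fun _ => rfl, fun h => absurd hv h⟩
    · obtain ⟨w, hw⟩ := hT.1.exists_walk_length_eq_dist v o
      cases w with
      | nil => exact absurd rfl hv
      | @cons _ u _ hadj w' =>
        refine ⟨u, fun h => absurd h hv, fun _ => ⟨hadj, ?_⟩⟩
        have := SimpleGraph.dist_le w'
        rw [SimpleGraph.Walk.length_cons] at hw
        omega
  choose p hp0 hp1 using h
  have hp : IsParent o p := ⟨hp0 o rfl, fun v => T.dist v o, fun v hv => (hp1 v hv).2⟩
  refine ⟨p, hp, ?_⟩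
  have hle : parentGraph p ≤ T := by
    intro v w h
    rw [parentGraph, SimpleGraph.fromRel_adj] at h
    obtain ⟨hne, rfl | rfl⟩ := h
    · exact (hp1 v fun h => hne (by rw [h, hp.1])).1
    · exact (hp1 w fun h => hne (by rw [h, hp.1])).1.symm
  exact le_antisymm hle ((SimpleGraph.isTree_iff_minimal_connected.1 hT).2 hp.isTree.1 hle)

/-- Invariance of the tree is equivariance of the parent function: `σ⁻¹ ∘ p ∘ σ` is a parent
function of the same rooted tree, so it equals `p`. -/
theorem parentGraph_invariant_iff (σ : Equiv.Perm V) (hσ : σ o = o) (hp : IsParent o p) :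
    (∀ i j, (parentGraph p).Adj i j ↔ (parentGraph p).Adj (σ i) (σ j)) ↔
      ∀ v, p (σ v) = σ (p v) := by
  constructor
  · intro h
    have hσ' : σ.symm o = o := by rw [Equiv.symm_apply_eq, hσ]
    have hq : IsParent o (fun v => σ.symm (p (σ v))) := by
      obtain ⟨h0, r, hr⟩ := hp
      refine ⟨by simp [hσ, h0, hσ'], fun v => r (σ v), fun v hv => ?_⟩
      simpa using hr (σ v) fun h => hv (by rw [← hσ'] ; rw [← h]; simp)
    have := parentGraph_inj hp hq (by
      ext i j
      rw [h i j]
      simp only [parentGraph, SimpleGraph.fromRel_adj, Equiv.symm_apply_eq]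
      simp [σ.injective.eq_iff])
    intro v
    have := congrFun this v
    rw [this]; simp
  · intro h i j
    simp [parentGraph, SimpleGraph.fromRel_adj, h, σ.injective.eq_iff]

theorem tree_equiv (σ : Equiv.Perm V) [Finite V] (hσ : σ o = o) :
    Nonempty ({p : V → V // IsParent o p ∧ ∀ v, p (σ v) = σ (p v)} ≃
      {T : SimpleGraph V // T.IsTree ∧ ∀ i j, T.Adj i j ↔ T.Adj (σ i) (σ j)}) := by
  refine ⟨Equiv.ofBijective (fun p => ⟨parentGraph p.1, p.2.1.isTree,
    (parentGraph_invariant_iff σ hσ p.2.1).2 p.2.2⟩) ⟨?_, ?_⟩⟩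
  · rintro ⟨p, hp⟩ ⟨q, hq⟩ h
    exact Subtype.ext (parentGraph_inj hp.1 hq.1 (congrArg Subtype.val h))
  · rintro ⟨T, hT, hi⟩
    obtain ⟨p, hp, rfl⟩ := exists_parent o hT
    exact ⟨⟨p, hp, (parentGraph_invariant_iff σ hσ hp).1 hi⟩, rfl⟩
end Tree

/-! ### Cycle representatives and equivariant parent functions -/

section Cycles
open Function
variable {V : Type} (σ : Equiv.Perm V) (o : V)

/-- A chosen representative of the cycle of `σ` through `v`. -/
noncomputable def cycleRep (v : V) : V :=
  (Quotient.mk (Equiv.Perm.SameCycle.setoid σ) v).out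

/-- The chosen representatives of the cycles of length `d`, the cycle `{o}` being left out; there
is one for each entry of the block of index `d` of a `σ`-Prüfer sequence. -/
abbrev RepOf (d : ℕ) : Type := {v : V // minimalPeriod σ v = d ∧ v ≠ o ∧ cycleRep σ v = v}

/-- The set `Λ_d` of points fixed by `σ ^ d`. -/
abbrev Lam (d : ℕ) : Type := {x : V // (σ ^ d) x = x}

/-- On `Λ_d` with `d ≥ 1` this is membership in `Λ'_d`: the point is the root or has a period
smaller than `d`. -/
abbrev Old (d : ℕ) (x : V) : Prop := ¬ (minimalPeriod σ x = d ∧ x ≠ o)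

variable {σ o}

theorem cycleRep_pow (i : ℕ) (v : V) : cycleRep σ ((σ ^ i) v) = cycleRep σ v := by
  have : σ.SameCycle ((σ ^ i) v) v := by
    exact Equiv.Perm.SameCycle.symm ⟨i, by simp⟩
  exact congrArg Quotient.out (Quotient.sound (s := Equiv.Perm.SameCycle.setoid σ) this)

theorem minimalPeriod_pow (i : ℕ) (v : V) :
    minimalPeriod σ ((σ ^ i) v) = minimalPeriod σ v := by
  refine Nat.dvd_antisymm ?_ ?_
  · rw [← pow_fix_iff, ← Equiv.Perm.mul_apply, ← pow_add, add_comm, pow_add,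
      Equiv.Perm.mul_apply, (pow_fix_iff σ _ v).2 dvd_rfl]
  · rw [← pow_fix_iff]
    apply (σ ^ i).injective
    rw [← Equiv.Perm.mul_apply, ← pow_add, add_comm, pow_add, Equiv.Perm.mul_apply,
      (pow_fix_iff σ _ _).2 dvd_rfl]

theorem pow_root (hσ : σ o = o) (i : ℕ) : (σ ^ i) o = o :=
  Equiv.Perm.pow_apply_eq_self_of_apply_eq_self hσ i

theorem pow_eq_pow_of_dvd {i j : ℕ} {v x : V} (h : (σ ^ i) v = (σ ^ j) v)
    (hx : minimalPeriod σ x ∣ minimalPeriod σ v) : (σ ^ i) x = (σ ^ j) x := by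
  wlog hij : i ≤ j generalizing i j
  · exact (this h.symm (by omega)).symm
  obtain ⟨k, rfl⟩ := Nat.exists_eq_add_of_le hij
  rw [pow_add, Equiv.Perm.mul_apply] at h ⊢
  have h1 := (pow_fix_iff σ k v).1 ((σ ^ i).injective h).symm
  rw [(pow_fix_iff σ k x).2 (hx.trans h1)]

variable [Finite V]

theorem exists_pow_cycleRep (v : V) : ∃ i : ℕ, (σ ^ i) (cycleRep σ v) = v := by
  have : σ.SameCycle (cycleRep σ v) v :=
    Quotient.exact (s := Equiv.Perm.SameCycle.setoid σ) (Quotient.out_eq _)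
  exact this.exists_nat_pow_eq

theorem cycleRep_idem (v : V) : cycleRep σ (cycleRep σ v) = cycleRep σ v := by
  obtain ⟨i, hi⟩ := exists_pow_cycleRep (σ := σ) v
  conv_rhs => rw [← hi, cycleRep_pow]

theorem minimalPeriod_cycleRep (v : V) :
    minimalPeriod σ (cycleRep σ v) = minimalPeriod σ v := by
  obtain ⟨i, hi⟩ := exists_pow_cycleRep (σ := σ) v
  conv_rhs => rw [← hi, minimalPeriod_pow]

theorem cycleRep_ne_root (hσ : σ o = o) {v : V} (hv : v ≠ o) : cycleRep σ v ≠ o := by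
  intro h
  obtain ⟨i, hi⟩ := exists_pow_cycleRep (σ := σ) v
  rw [h, pow_root hσ] at hi
  exact hv hi.symm

/-- The representative of the cycle of `v ≠ o`, as an element of `RepOf`. -/
noncomputable def repMk (hσ : σ o = o) {v : V} (hv : v ≠ o) : RepOf σ o (minimalPeriod σ v) :=
  ⟨cycleRep σ v, minimalPeriod_cycleRep v, cycleRep_ne_root hσ hv, cycleRep_idem v⟩

/-- `Λ_d` consists of `Λ'_d` and of `d` points `σ ^ i c` for each representative `c` of a cycle
of length `d`. -/
theorem exists_lamEquiv (hσ : σ o = o) (d : ℕ) :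
    ∃ e : Lam σ d ≃ {x : Lam σ d // Old σ o d x} ⊕ RepOf σ o d × Fin d,
      ∀ x c, cycleRep σ x.1 = c.1 ↔ ∃ i, e x = Sum.inr (c, i) := by
  let F : {x : Lam σ d // Old σ o d x} ⊕ RepOf σ o d × Fin d → Lam σ d :=
    Sum.elim (fun x => x.1) (fun y => ⟨(σ ^ y.2.1) y.1.1, by
      rw [pow_fix_iff, minimalPeriod_pow, y.1.2.1]⟩)
  have hFr : ∀ (c : RepOf σ o d) (i : Fin d), (F (.inr (c, i))).1 = (σ ^ i.1) c.1 :=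
    fun _ _ => rfl
  have hnew : ∀ (c : RepOf σ o d) (i : Fin d), ¬ Old σ o d (F (.inr (c, i))).1 := by
    intro c i
    rw [hFr, Old, not_not]
    refine ⟨by rw [minimalPeriod_pow, c.2.1], fun h => c.2.2.1 ?_⟩
    exact (σ ^ i.1).injective (h.trans (pow_root hσ _).symm)
  have hrep : ∀ (c : RepOf σ o d) (i : Fin d), cycleRep σ (F (.inr (c, i))).1 = c.1 := by
    intro c i
    rw [hFr, cycleRep_pow, c.2.2.2]
  have hsurj : ∀ (x : Lam σ d) (c : RepOf σ o d), cycleRep σ x.1 = c.1 →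
      ∃ i, F (.inr (c, i)) = x := by
    intro x c hx
    obtain ⟨i, hi⟩ := exists_pow_cycleRep (σ := σ) x.1
    have hpos : 0 < d := by
      rw [← c.2.1]
      exact minimalPeriod_pos_of_mem_periodicPts
        (σ.injective.mem_periodicPts _)
    refine ⟨⟨i % d, Nat.mod_lt _ hpos⟩, Subtype.ext ?_⟩
    rw [hFr, ← hi, hx, ← Equiv.Perm.iterate_eq_pow, ← Equiv.Perm.iterate_eq_pow]
    have := iterate_mod_minimalPeriod_eq (f := σ) (x := c.1) (n := i)
    rwa [c.2.1] at this
  have hF : Bijective F := by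
    constructor
    · rintro (x | ⟨c, i⟩) (y | ⟨c', j⟩) h
      · exact congrArg Sum.inl (Subtype.ext h)
      · exact absurd x.2 (by
          have : x.1 = F (.inr (c', j)) := h
          rw [this]; exact hnew c' j)
      · exact absurd y.2 (by
          have : F (.inr (c, i)) = y.1 := h
          rw [← this]; exact hnew c i)
      · have hc : c = c' := Subtype.ext (by rw [← hrep c i, ← hrep c' j, h])
        subst hc
        have h' := congrArg Subtype.val h
        rw [hFr, hFr, ← Equiv.Perm.iterate_eq_pow, ← Equiv.Perm.iterate_eq_pow,
          iterate_eq_iterate_iff_of_lt_minimalPeriod (by rw [c.2.1]; exact i.2)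
            (by rw [c.2.1]; exact j.2)] at h'
        rw [Fin.ext h']
    · intro x
      by_cases hx : Old σ o d x
      · exact ⟨.inl ⟨x, hx⟩, rfl⟩
      · rw [Old, not_not] at hx
        obtain ⟨i, hi⟩ := hsurj x ⟨cycleRep σ x.1, by rw [minimalPeriod_cycleRep, hx.1],
          cycleRep_ne_root hσ hx.2, cycleRep_idem _⟩ rfl
        exact ⟨_, hi⟩
  refine ⟨(Equiv.ofBijective F hF).symm, fun x c => ⟨fun h => ?_, ?_⟩⟩
  · obtain ⟨i, hi⟩ := hsurj x c h
    exact ⟨i, by rw [Equiv.symm_apply_eq]; exact hi.symm⟩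
  · rintro ⟨i, hi⟩
    rw [Equiv.symm_apply_eq] at hi
    rw [hi]
    exact hrep c i

variable (σ o) in
/-- A choice of parents in `Λ_d` for the representatives of the `d`-cycles is acyclic when no
closed chain of `d`-cycles arises; a rank function on representatives witnesses it. -/
def RepAcyc (d : ℕ) (f : RepOf σ o d → Lam σ d) : Prop :=
  ∃ r : RepOf σ o d → ℕ, ∀ c c', cycleRep σ (f c).1 = c'.1 → r c' < r c

theorem card_lam (hσ : σ o = o) (d : ℕ) :
    Nat.card (Lam σ d) =
      Nat.card {x : Lam σ d // Old σ o d x} + d * Nat.card (RepOf σ o d) := by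
  obtain ⟨e, -⟩ := exists_lamEquiv hσ d
  rw [Nat.card_congr e, Nat.card_sum, Nat.card_prod, Nat.card_fin, mul_comm d]

/-- The number of points of exact period `d`, not counting the root. -/
theorem card_new (hσ : σ o = o) (d : ℕ) :
    Nat.card {v : V // minimalPeriod σ v = d ∧ v ≠ o} = d * Nat.card (RepOf σ o d) := by
  classical
  have h1 := card_lam hσ d
  have h2 : Nat.card (Lam σ d) = Nat.card {x : Lam σ d // Old σ o d x} +
      Nat.card {x : Lam σ d // ¬ Old σ o d x} := by
    rw [← Nat.card_sum, Nat.card_congr (Equiv.sumCompl _)]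
  have h3 : Nat.card {x : Lam σ d // ¬ Old σ o d x} =
      Nat.card {v : V // minimalPeriod σ v = d ∧ v ≠ o} := by
    refine Nat.card_congr ((Equiv.subtypeSubtypeEquivSubtypeInter (fun x => (σ ^ d) x = x)
      (fun x => ¬ Old σ o d x)).trans (Equiv.subtypeEquivRight fun v => ?_))
    rw [Old, not_not, pow_fix_iff]
    exact ⟨fun h => h.2, fun h => ⟨h.1 ▸ dvd_rfl, h⟩⟩
  omega

theorem card_repAcyc (hσ : σ o = o) (d : ℕ) :
    Nat.card {f : RepOf σ o d → Lam σ d // RepAcyc σ o d f} =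
      forestCount (Nat.card {x : Lam σ d // Old σ o d x}) d (Nat.card (RepOf σ o d)) := by
  obtain ⟨e, he⟩ := exists_lamEquiv hσ d
  have h := card_acyc (Fin d) _ (RepOf σ o d) {x : Lam σ d // Old σ o d x} rfl
  rw [Nat.card_fin] at h
  rw [← h]
  refine Nat.card_congr ((Equiv.arrowCongr (Equiv.refl _) e).subtypeEquiv fun f => ?_)
  refine exists_congr fun r => forall₂_congr fun c c' => ?_
  rw [he, forall_exists_index]
  rfl

/-- Summing a rank function over the powers of `σ` makes it constant on cycles, and it still
decreases along an equivariant `p`. -/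
theorem IsParent.exists_invariant_rank {p : V → V} (hp : IsParent o p) (hσ : σ o = o)
    (hpσ : ∀ v, p (σ v) = σ (p v)) :
    ∃ R : V → ℕ, (∀ v, v ≠ o → R (p v) < R v) ∧ ∀ v, R (cycleRep σ v) = R v := by
  obtain ⟨-, r, hr⟩ := hp
  have hpow : ∀ (i : ℕ) v, p ((σ ^ i) v) = (σ ^ i) (p v) := by
    intro i
    induction i with
    | zero => intro v; rfl
    | succ i ih => intro v; rw [pow_succ, Equiv.Perm.mul_apply, ih, hpσ, Equiv.Perm.mul_apply]
  have hN : 0 < orderOf σ := orderOf_pos σ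
  let R : V → ℕ := fun v => ∑ i ∈ Finset.range (orderOf σ), r ((σ ^ i) v)
  have hR : ∀ v, R (σ v) = R v := by
    intro v
    have h := Finset.sum_range_succ' (fun i => r ((σ ^ i) v)) (orderOf σ)
    rw [Finset.sum_range_succ, pow_orderOf_eq_one, pow_zero] at h
    exact (add_right_cancel h).symm
  refine ⟨R, fun v hv => ?_, fun v => ?_⟩
  · refine Finset.sum_lt_sum_of_nonempty ⟨0, Finset.mem_range.2 hN⟩ fun i _ => ?_
    rw [← hpow]
    refine hr _ fun h => hv ?_
    exact (σ ^ i).injective (h.trans (pow_root hσ i).symm)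
  · obtain ⟨i, hi⟩ := exists_pow_cycleRep (σ := σ) v
    have : ∀ (i : ℕ) w, R ((σ ^ i) w) = R w := by
      intro i
      induction i with
      | zero => intro w; rfl
      | succ i ih => intro w; rw [pow_succ, Equiv.Perm.mul_apply, ih, hR]
    conv_rhs => rw [← hi, this]

/-- Rank functions for the separate cycle lengths combine to a global one: the period of `p v`
divides that of `v`, so periods decrease weakly along `p`, and the rank within a block decreases
while the period stays the same. -/
theorem isParent_of_repAcyc (hσ : σ o = o) {p : V → V} (h0 : p o = o)
    (hpow : ∀ (i : ℕ) v, p ((σ ^ i) v) = (σ ^ i) (p v))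
    (f : ∀ d, RepOf σ o d → Lam σ d) (hf : ∀ d, RepAcyc σ o d (f d))
    (hpf : ∀ d (c : RepOf σ o d), p c.1 = (f d c).1) : IsParent o p := by
  classical
  have := Fintype.ofFinite V
  choose r hr using hf
  -- `ρ v` is the rank of the cycle of `v` within its block; `M` exceeds all these ranks, so that
  -- `minimalPeriod σ v * M + ρ v` orders vertices lexicographically by period and then by `ρ`.
  let ρ : V → ℕ := fun v => if hv : v = o then 0 else r _ (repMk hσ hv)
  let M := 1 + ∑ v, ρ v
  have hM : ∀ v, ρ v < M := by
    intro v
    have := Finset.single_le_sum (f := ρ) (fun _ _ => Nat.zero_le _) (Finset.mem_univ v)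
    omega
  refine ⟨h0, fun v => if v = o then 0 else minimalPeriod σ v * M + ρ v, fun v hv => ?_⟩
  have hpos : 0 < minimalPeriod σ v :=
    minimalPeriod_pos_of_mem_periodicPts (σ.injective.mem_periodicPts _)
  have hMpos : 0 < M := Nat.add_pos_left Nat.one_pos _
  simp only [hv, if_false]
  by_cases hpv : p v = o
  · simp only [hpv, if_true]
    positivity
  · simp only [hpv, if_false]
    have hdvd : minimalPeriod σ (p v) ∣ minimalPeriod σ v := by
      rw [← pow_fix_iff, ← hpow, (pow_fix_iff σ _ v).2 dvd_rfl]
    rcases (Nat.le_of_dvd hpos hdvd).lt_or_eq with hlt | heq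
    · have h1 := hM (p v)
      have h2 : (minimalPeriod σ (p v) + 1) * M ≤ minimalPeriod σ v * M :=
        Nat.mul_le_mul_right _ hlt
      rw [add_mul] at h2
      omega
    · have : ρ (p v) < ρ v := by
        obtain ⟨i, hi⟩ := exists_pow_cycleRep (σ := σ) v
        have key : ∀ d (c' : RepOf σ o d) (c : RepOf σ o (minimalPeriod σ v)),
            d = minimalPeriod σ v →
            cycleRep σ (f _ c).1 = c'.1 → r d c' < r _ c := by
          rintro d c' c rfl h
          exact hr _ c c' h
        simp only [ρ, hv, hpv, dif_neg, not_false_eq_true]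
        refine key _ _ _ heq ?_
        rw [← hpf]
        change cycleRep σ (p (cycleRep σ v)) = cycleRep σ (p v)
        conv_rhs => rw [← hi, hpow, cycleRep_pow]
      rw [heq]
      omega

/-- An equivariant parent function amounts to an acyclic choice, for each `d` separately, of the
parents of the representatives of the `d`-cycles: the parent of `σ ^ i c` is `σ ^ i` applied to
the parent of `c`. -/
theorem parent_equiv (hσ : σ o = o) :
    Nonempty ({p : V → V // IsParent o p ∧ ∀ v, p (σ v) = σ (p v)} ≃
      ∀ d, {f : RepOf σ o d → Lam σ d // RepAcyc σ o d f}) := by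
  classical
  have pow_of : ∀ {p : V → V}, (∀ v, p (σ v) = σ (p v)) →
      ∀ (i : ℕ) v, p ((σ ^ i) v) = (σ ^ i) (p v) := by
    intro p hp i
    induction i with
    | zero => intro v; rfl
    | succ i ih => intro v; rw [pow_succ, Equiv.Perm.mul_apply, ih, hp, Equiv.Perm.mul_apply]
  refine ⟨Equiv.ofBijective (fun p d => ⟨fun c => ⟨p.1 c.1, ?_⟩, ?_⟩) ⟨?_, ?_⟩⟩
  · rw [← pow_of p.2.2, (pow_fix_iff σ d c.1).2 (by rw [c.2.1])]
  · obtain ⟨R, hR, hRc⟩ := p.2.1.exists_invariant_rank hσ p.2.2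
    refine ⟨fun c => R c.1, fun c c' h => ?_⟩
    dsimp only at h ⊢
    rw [← h, hRc]
    exact hR _ c.2.2.1
  · rintro ⟨p, hp, hpσ⟩ ⟨q, hq, hqσ⟩ h
    refine Subtype.ext (funext fun v => ?_)
    change p v = q v
    by_cases hv : v = o
    · rw [hv, hp.1, hq.1]
    · have h1 := congrArg Subtype.val
        (congrFun (congrArg Subtype.val (congrFun h (minimalPeriod σ v))) (repMk hσ hv))
      change p (cycleRep σ v) = q (cycleRep σ v) at h1
      obtain ⟨i, hi⟩ := exists_pow_cycleRep (σ := σ) v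
      rw [← hi, pow_of hpσ, pow_of hqσ, h1]
  · intro f
    choose idx hidx using exists_pow_cycleRep (σ := σ)
    let p : V → V := fun v =>
      if hv : v = o then o else (σ ^ idx v) ((f _).1 (repMk hσ hv)).1
    have hp0 : p o = o := by simp [p]
    have hval : ∀ d (c : RepOf σ o d) (i : ℕ), p ((σ ^ i) c.1) = (σ ^ i) ((f d).1 c).1 := by
      intro d c i
      have hne : (σ ^ i) c.1 ≠ o := fun h =>
        c.2.2.1 ((σ ^ i).injective (h.trans (pow_root hσ i).symm))
      have hrep : cycleRep σ ((σ ^ i) c.1) = c.1 := by rw [cycleRep_pow, c.2.2.2]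
      have hmp : minimalPeriod σ ((σ ^ i) c.1) = d := by rw [minimalPeriod_pow, c.2.1]
      have key : ∀ d' (c' : RepOf σ o d'), d' = d → c'.1 = c.1 →
          ((f d').1 c').1 = ((f d).1 c).1 := by
        rintro d' c' rfl h
        rw [Subtype.ext h]
      have h1 : p ((σ ^ i) c.1) = (σ ^ idx ((σ ^ i) c.1)) ((f d).1 c).1 := by
        simp only [p, dif_neg hne]
        rw [key _ (repMk hσ hne) hmp hrep]
      rw [h1]
      refine pow_eq_pow_of_dvd (v := c.1) ?_ ?_
      · have := hidx ((σ ^ i) c.1)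
        rwa [hrep] at this
      · rw [c.2.1, ← pow_fix_iff]
        exact ((f d).1 c).2
    have hpf : ∀ d (c : RepOf σ o d), p c.1 = ((f d).1 c).1 := fun d c => hval d c 0
    have hpσ : ∀ v, p (σ v) = σ (p v) := by
      intro v
      by_cases hv : v = o
      · rw [hv, hσ, hp0, hσ]
      · obtain ⟨i, hi⟩ := exists_pow_cycleRep (σ := σ) v
        have h1 := hval _ (repMk hσ hv) i
        have h2 := hval _ (repMk hσ hv) (i + 1)
        change p ((σ ^ i) (cycleRep σ v)) = _ at h1
        change p ((σ ^ (i + 1)) (cycleRep σ v)) = _ at h2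
        rw [pow_succ', Equiv.Perm.mul_apply, Equiv.Perm.mul_apply, hi, ← h1, hi] at h2
        exact h2
    refine ⟨⟨p, isParent_of_repAcyc hσ hp0 (pow_of hpσ) (fun d => (f d).1)
      (fun d => (f d).2) hpf, hpσ⟩, ?_⟩
    funext d
    exact Subtype.ext (funext fun c => Subtype.ext (hpf d c))
end Cycles

/-! ### Blocks of `σ`-Prüfer sequences -/

open Function in
theorem card_repOf_eq {n : ℕ} (hn : 0 < n) (σ : Equiv.Perm (Fin n))
    (hσ : σ ⟨0, hn⟩ = ⟨0, hn⟩) (d : ℕ) :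
    Nat.card (RepOf σ ⟨0, hn⟩ d) = pruferLen σ d := by
  classical
  have h := card_new hσ d
  rw [Nat.card_eq_fintype_card, Fintype.card_subtype] at h
  have h0 : minimalPeriod σ (⟨0, hn⟩ : Fin n) = 1 := minimalPeriod_eq_one_iff_isFixedPt.2 hσ
  by_cases hd : d = 1
  · subst hd
    have h1 : (Finset.univ.filter fun v : Fin n => minimalPeriod σ v = 1 ∧ v ≠ ⟨0, hn⟩) =
        (Finset.univ.filter fun v : Fin n => minimalPeriod σ v = 1).erase ⟨0, hn⟩ := by
      ext v; simp [and_comm]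
    have hmem : (⟨0, hn⟩ : Fin n) ∈
        Finset.univ.filter fun v : Fin n => minimalPeriod σ v = 1 :=
      Finset.mem_filter.2 ⟨Finset.mem_univ _, h0⟩
    rw [h1, Finset.card_erase_of_mem hmem, one_mul] at h
    rw [pruferLen, if_pos rfl, cycleCount, Nat.div_one, h]
  · have h1 : (Finset.univ.filter fun v : Fin n => minimalPeriod σ v = d ∧ v ≠ ⟨0, hn⟩) =
        Finset.univ.filter fun v : Fin n => minimalPeriod σ v = d := by
      refine Finset.filter_congr fun v _ => ⟨fun h => h.1, fun h => ⟨h, ?_⟩⟩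
      rintro rfl
      exact hd (h.symm.trans h0)
    rw [h1] at h
    rw [pruferLen, if_neg hd, cycleCount, h]
    rcases Nat.eq_zero_or_pos d with rfl | hpos
    · rw [Nat.div_zero, Finite.card_eq_zero_iff]
      refine ⟨fun c => ?_⟩
      have : 0 < minimalPeriod σ c.1 :=
        minimalPeriod_pos_of_mem_periodicPts (σ.injective.mem_periodicPts _)
      have := c.2.1
      omega
    · rw [Nat.mul_div_cancel_left _ hpos]

open Function in
theorem old_one_iff {n : ℕ} (hn : 0 < n) (σ : Equiv.Perm (Fin n)) {x : Fin n}
    (hx : (σ ^ 1) x = x) : Old σ ⟨0, hn⟩ 1 x ↔ x.val = 0 := by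
  have h1 : minimalPeriod σ x = 1 := minimalPeriod_eq_one_iff_isFixedPt.2 (by rwa [pow_one] at hx)
  simp [Old, h1, Fin.ext_iff]

open Function in
theorem old_iff_of_ge_two {n : ℕ} (hn : 0 < n) (σ : Equiv.Perm (Fin n))
    (hσ : σ ⟨0, hn⟩ = ⟨0, hn⟩) {d : ℕ} (hd : 2 ≤ d) {x : Fin n} (hx : (σ ^ d) x = x) :
    Old σ ⟨0, hn⟩ d x ↔ ∃ e, e ∣ d ∧ e < d ∧ (σ ^ e) x = x := by
  have h0 : minimalPeriod σ (⟨0, hn⟩ : Fin n) = 1 := minimalPeriod_eq_one_iff_isFixedPt.2 hσ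
  have hdvd := (pow_fix_iff σ d x).1 hx
  constructor
  · intro h
    refine ⟨minimalPeriod σ x, hdvd, lt_of_le_of_ne (Nat.le_of_dvd (by omega) hdvd) ?_,
      (pow_fix_iff σ _ x).2 dvd_rfl⟩
    intro he
    refine h ⟨he, ?_⟩
    rintro rfl
    omega
  · rintro ⟨e, hed, hlt, he⟩ ⟨hm, -⟩
    have h1 := (pow_fix_iff σ e x).1 he
    have hepos : 0 < e := Nat.pos_of_dvd_of_pos hed (by omega)
    have := Nat.le_of_dvd hepos h1
    omega

/-- A `σ`-Prüfer sequence is a family of blocks with entries in `Λ_d` and last entry in `Λ'_d`. -/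
noncomputable def pruferEquiv {n : ℕ} (hn : 0 < n) (σ : Equiv.Perm (Fin n))
    (hσ : σ ⟨0, hn⟩ = ⟨0, hn⟩) :
    SigmaPruferSeq σ ≃ ∀ d, {s : Fin (pruferLen σ d) → Lam σ d //
      ∀ h : 0 < pruferLen σ d,
        Old σ ⟨0, hn⟩ d (s ⟨pruferLen σ d - 1, Nat.sub_lt h Nat.one_pos⟩).1} where
  toFun t d := ⟨fun k => ⟨t.s d k, t.entries_mem d k⟩, fun h => by
    rcases Nat.lt_or_ge d 2 with hd | hd
    · interval_cases d
      · simp [pruferLen, cycleCount] at h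
      · exact (old_one_iff hn σ (t.entries_mem 1 _)).2 (t.last_one h)
    · exact (old_iff_of_ge_two hn σ hσ hd (t.entries_mem d _)).2 (t.last_of_ge_two d hd h)⟩
  invFun f :=
    { s := fun d k => ((f d).1 k).1
      entries_mem := fun d k => ((f d).1 k).2
      last_one := fun h => (old_one_iff hn σ ((f 1).1 _).2).1 ((f 1).2 h)
      last_of_ge_two := fun d hd h =>
        (old_iff_of_ge_two hn σ hσ hd ((f d).1 _).2).1 ((f d).2 h) }
  left_inv _ := rfl
  right_inv _ := rfl

/-- σ-Prüfer sequences are in bijection with σ-invariant labeled trees on `[n]`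
(rooted at the vertex `1`, i.e. `0 : Fin n`). -/
theorem sigma_prufer_bijection (n : ℕ) (hn : 0 < n) (σ : Equiv.Perm (Fin n))
    (hσ : σ ⟨0, hn⟩ = ⟨0, hn⟩) :
    Nonempty (SigmaPruferSeq σ ≃
      {T : SimpleGraph (Fin n) //
        T.IsTree ∧ ∀ i j : Fin n, T.Adj i j ↔ T.Adj (σ i) (σ j)}) := by
  obtain ⟨e₁⟩ := tree_equiv σ hσ
  obtain ⟨e₂⟩ := parent_equiv hσ
  have hblock : ∀ d, Nonempty ({s : Fin (pruferLen σ d) → Lam σ d //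
      ∀ h : 0 < pruferLen σ d,
        Old σ ⟨0, hn⟩ d (s ⟨pruferLen σ d - 1, Nat.sub_lt h Nat.one_pos⟩).1} ≃
      {f : RepOf σ ⟨0, hn⟩ d → Lam σ d // RepAcyc σ ⟨0, hn⟩ d f}) := by
    intro d
    refine (Finite.card_eq).1 ?_
    have hk := card_repOf_eq hn σ hσ d
    have hX := card_lam hσ d
    rw [card_repAcyc hσ d, hk]
    rw [hk] at hX
    exact card_lastIn (fun x : Lam σ d => Old σ ⟨0, hn⟩ d x.1) d _ hX
  exact ⟨((pruferEquiv hn σ hσ).trans (Equiv.piCongrRight fun d => (hblock d).some)).trans (e₂.symm.trans e₁)⟩
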